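/- Let u be a Lyndon word, i a positive integer, a a word of length i·l(u) with a ≥ u^i in the lexicographic order, and b a word with b ≫ u. Then the concatenation ab satisfies ab ≫ u. -/

import Mathlib

/-- A word `u` is a Lyndon word if it is nonempty and lexicographically smaller than
each of its proper nonempty suffixes. -/
def IsLyndon {X : Type*} [LinearOrder X] (u : List X) : Prop :=
  u ≠ [] ∧ ∀ v w : List X, v ≠ [] → w ≠ [] → u = v ++ w → List.Lex (· < ·) u w

/-- `ls` is a Lyndon factorization of `u`: all factors are Lyndon words, the factors are
(lexicographically) nonincreasing, and their concatenation is `u`. -/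
def IsLyndonFactorization {X : Type*} [LinearOrder X] (ls : List (List X)) (u : List X) : Prop :=
  (∀ l ∈ ls, IsLyndon l) ∧ ls.Chain' (fun a b => ¬ List.Lex (· < ·) a b) ∧ ls.flatten = u

/-- `v ≫ u` : the first Lyndon letter of the Lyndon decomposition of `v` is
lexicographically greater than `u`. -/
def MuchGt {X : Type*} [LinearOrder X] (v u : List X) : Prop :=
  ∃ (l : List X) (t : List (List X)),
    IsLyndonFactorization (l :: t) v ∧ List.Lex (· < ·) u l

/-!
For a Lyndon word `u`, a word `v` satisfies `v ≫ u` exactly when some power `u ^ n` precedes `v`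
because of a letter, that is, with `u ^ n` not a prefix of `v`. In one direction, all suffixes of
the first Lyndon letter of `v` exceed `u`, so removing copies of `u` from its front ends in a
mismatch. In the other, if all Lyndon letters of `v` are at most `u`, they can be cancelled one by
one against `u ^ n`, whose nonempty suffixes are all at least `u`, and no such mismatch is ever met.
This criterion passes from `b` to `a ++ b`: either `a = u ^ i`, and `u ^ (i + n)` works, or the
mismatch already occurs between `u ^ i` and `a`.
-/

section Words

variable {X : Type*} {s x y : List X}

theorem isSuffix_append_iff : s <:+ x ++ y ↔ s <:+ y ∨ ∃ w, w <:+ x ∧ s = w ++ y := by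
  constructor
  · intro h
    rcases List.suffix_or_suffix_of_suffix h (List.suffix_append x y) with hs | ⟨w, rfl⟩
    · exact Or.inl hs
    · exact Or.inr ⟨w, List.suffix_append_self_iff.1 h, rfl⟩
  · rintro (hs | ⟨w, hw, rfl⟩)
    · exact List.suffix_append_of_suffix hs
    · exact List.suffix_append_self_iff.2 hw

variable [LinearOrder X] {u l h v : List X} {ls : List (List X)}

/-- `x` precedes `y` lexicographically because of a letter: at the first position where the two
words disagree both have a letter, and that of `x` is smaller. Excluding prefixes from `x < y`
encodes this without mentioning positions; unlike `<`, the relation survives extending both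
words. -/
def MismatchLT (x y : List X) : Prop :=
  x < y ∧ ¬ x <+: y

namespace MismatchLT

theorem not_nil_left : ¬ MismatchLT [] y := fun h => h.2 List.nil_prefix

theorem not_nil_right : ¬ MismatchLT x [] := fun h => List.not_lt_nil x h.1

theorem append (hxy : MismatchLT x y) (s t : List X) : MismatchLT (x ++ s) (y ++ t) := by
  obtain ⟨hlt, hpre⟩ := hxy
  induction hlt with
  | nil => exact absurd List.nil_prefix hpre
  | cons _ ih =>
    have ⟨hlt', hpre'⟩ := ih fun hp => hpre (List.cons_prefix_cons.2 ⟨rfl, hp⟩)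
    exact ⟨List.Lex.cons hlt', fun hp => hpre' (List.cons_prefix_cons.1 hp).2⟩
  | rel hab => exact ⟨List.Lex.rel hab, fun hp => hab.ne (List.cons_prefix_cons.1 hp).1⟩

theorem append_right (hxy : MismatchLT x y) (t : List X) : MismatchLT x (y ++ t) := by
  simpa using hxy.append [] t

theorem append_lt (hxy : MismatchLT x y) (s : List X) : x ++ s < y := by
  simpa using (hxy.append s []).1

end MismatchLT

theorem append_lt_append_left_iff (p : List X) : p ++ x < p ++ y ↔ x < y :=
  StrictMono.lt_iff_lt (f := (p ++ ·)) fun _ _ => List.append_left_lt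

theorem mismatchLT_append_left_iff (p : List X) :
    MismatchLT (p ++ x) (p ++ y) ↔ MismatchLT x y :=
  and_congr (append_lt_append_left_iff p) (not_congr (List.prefix_append_right_inj p))

theorem mismatchLT_or_isPrefix_of_le (hle : x ≤ y) : MismatchLT x y ∨ x <+: y :=
  or_iff_not_imp_right.2 fun hpre =>
    ⟨lt_of_le_of_ne hle fun heq => hpre (heq ▸ List.prefix_refl x), hpre⟩

theorem mismatchLT_of_lt_of_length_le (hlt : x < y) (hlen : y.length ≤ x.length) :
    MismatchLT x y :=
  ⟨hlt, fun hpre => hlt.ne (hpre.eq_of_length_le hlen)⟩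

theorem exists_replicate_flatten_mismatchLT {s : List X} (hu : u ≠ []) (hs : s ≠ [])
    (hsuff : ∀ w, w <:+ s → w ≠ [] → u < w) :
    ∃ n, MismatchLT (List.replicate n u).flatten s := by
  have hlt : u < s := hsuff s (List.suffix_refl s) hs
  rcases mismatchLT_or_isPrefix_of_le hlt.le with hmis | ⟨w, hsw⟩
  · exact ⟨1, by simpa using hmis⟩
  · have hw : w ≠ [] := by
      rintro rfl
      exact hlt.ne (by simpa using hsw)
    obtain ⟨n, hn⟩ := exists_replicate_flatten_mismatchLT hu hw
      fun w' hw' => hsuff w' (hsw ▸ List.suffix_append_of_suffix hw')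
    exact ⟨n + 1, by simpa [List.replicate_succ, ← hsw, mismatchLT_append_left_iff] using hn⟩
termination_by s.length
decreasing_by simpa [← hsw] using List.length_pos_iff.2 hu

theorem not_mismatchLT_flatten (hx : ∀ w, w <:+ x → w ≠ [] → u ≤ w) (hls : ∀ l ∈ ls, l ≤ u) :
    ¬ MismatchLT x ls.flatten := by
  induction ls generalizing x with
  | nil => exact MismatchLT.not_nil_right
  | cons l t ih =>
    obtain ⟨hl, ht⟩ := List.forall_mem_cons.1 hls
    intro hmis
    rcases eq_or_ne x [] with rfl | hx₀
    · exact MismatchLT.not_nil_left hmis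
    have hlx : l ≤ x := hl.trans (hx x (List.suffix_refl x) hx₀)
    rcases mismatchLT_or_isPrefix_of_le hlx with hlx' | ⟨w, rfl⟩
    · exact lt_asymm hmis.1 (hlx'.append_lt t.flatten)
    · exact ih (fun w' hw' => hx w' (List.suffix_append_of_suffix hw')) ht
        ((mismatchLT_append_left_iff l).1 hmis)

theorem isLyndon_iff :
    IsLyndon u ↔ u ≠ [] ∧ ∀ w, w <:+ u → w ≠ [] → w ≠ u → u < w := by
  refine and_congr_right fun _ => ⟨?_, ?_⟩
  · rintro hlt w ⟨v, rfl⟩ hw hne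
    exact hlt v w (by rintro rfl; exact hne rfl) hw rfl
  · rintro hlt v w hv hw rfl
    exact hlt w (List.suffix_append v w) hw (by simpa using hv)

theorem isLyndon_singleton (a : X) : IsLyndon [a] :=
  isLyndon_iff.2 ⟨List.cons_ne_nil a [], fun w hw hw₀ hne => by
    rcases List.suffix_cons_iff.1 hw with rfl | hw
    · exact absurd rfl hne
    · exact absurd (List.suffix_nil.1 hw) hw₀⟩

namespace IsLyndon

theorem lt_of_isSuffix (hu : IsLyndon u) (hs : s <:+ u) (hs₀ : s ≠ []) (hne : s ≠ u) : u < s :=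
  (isLyndon_iff.1 hu).2 s hs hs₀ hne

theorem le_of_isSuffix (hu : IsLyndon u) (hs : s <:+ u) (hs₀ : s ≠ []) : u ≤ s := by
  rcases eq_or_ne s u with rfl | hne
  · exact le_rfl
  · exact (hu.lt_of_isSuffix hs hs₀ hne).le

theorem le_of_isSuffix_replicate_flatten (hu : IsLyndon u) {n : ℕ}
    (hs : s <:+ (List.replicate n u).flatten) (hs₀ : s ≠ []) : u ≤ s := by
  induction n with
  | zero => exact absurd (List.suffix_nil.1 hs) hs₀
  | succ n ih =>
    rw [List.replicate_succ, List.flatten_cons] at hs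
    rcases isSuffix_append_iff.1 hs with hs | ⟨w, hw, rfl⟩
    · exact ih hs
    rcases eq_or_ne w [] with rfl | hw₀
    · exact ih (List.suffix_refl _)
    · exact (hu.le_of_isSuffix hw hw₀).trans (not_lt.1 List.le_append_left)

theorem append_lt_right (hl : IsLyndon l) (hh : IsLyndon h) (hlt : l < h) : l ++ h < h := by
  rcases mismatchLT_or_isPrefix_of_le hlt.le with hmis | ⟨w, rfl⟩
  · exact hmis.append_lt h
  · have hw : w ≠ [] := by
      rintro rfl
      simp at hlt
    exact List.append_left_lt
      (hh.lt_of_isSuffix (List.suffix_append l w) hw (by simpa using hl.1))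

theorem append (hl : IsLyndon l) (hh : IsLyndon h) (hlt : l < h) : IsLyndon (l ++ h) := by
  have hlh : l ++ h < h := hl.append_lt_right hh hlt
  refine isLyndon_iff.2 ⟨by simp [hl.1], fun s hs hs₀ hne => ?_⟩
  rcases isSuffix_append_iff.1 hs with hs | ⟨w, hw, rfl⟩
  · exact hlh.trans_le (hh.le_of_isSuffix hs hs₀)
  rcases eq_or_ne w [] with rfl | hw₀
  · exact hlh
  · have hlw : l < w := hl.lt_of_isSuffix hw hw₀ (by rintro rfl; exact hne rfl)
    exact ((mismatchLT_of_lt_of_length_le hlw hw.length_le).append h h).1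

theorem exists_isLyndonFactorization_append (hl : IsLyndon l)
    (hv : IsLyndonFactorization ls v) : ∃ ls', IsLyndonFactorization ls' (l ++ v) := by
  obtain ⟨hlyn, hchain, rfl⟩ := hv
  induction ls generalizing l with
  | nil => exact ⟨[l], by simpa using hl, List.isChain_singleton l, rfl⟩
  | cons h t ih =>
    obtain ⟨hh, ht⟩ := List.forall_mem_cons.1 hlyn
    by_cases hlt : l < h
    · simpa using ih (hl.append hh hlt) ht hchain.tail
    · exact ⟨l :: h :: t, List.forall_mem_cons.2 ⟨hl, hlyn⟩,
        List.isChain_cons_cons.2 ⟨hlt, hchain⟩, rfl⟩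

end IsLyndon

theorem exists_isLyndonFactorization (v : List X) : ∃ ls, IsLyndonFactorization ls v := by
  induction v with
  | nil => exact ⟨[], by simp, List.isChain_nil, rfl⟩
  | cons a v ih =>
    obtain ⟨ls, hls⟩ := ih
    exact (isLyndon_singleton a).exists_isLyndonFactorization_append hls

theorem IsLyndonFactorization.le_head {m : List X} (hv : IsLyndonFactorization (l :: ls) v)
    (hm : m ∈ l :: ls) : m ≤ l := by
  have hchain : (l :: ls).IsChain (· ≥ ·) := hv.2.1.imp fun _ _ => not_lt.1
  rcases List.mem_cons.1 hm with rfl | hm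
  · exact le_rfl
  · exact List.rel_of_pairwise_cons hchain.pairwise hm

theorem MuchGt.exists_mismatchLT (hvu : MuchGt v u) (hu : u ≠ []) :
    ∃ n, MismatchLT (List.replicate n u).flatten v := by
  obtain ⟨l, t, ⟨hlyn, -, rfl⟩, hul : u < l⟩ := hvu
  have hl : IsLyndon l := hlyn l List.mem_cons_self
  obtain ⟨n, hn⟩ := exists_replicate_flatten_mismatchLT hu hl.1
    fun w hw hw₀ => hul.trans_le (hl.le_of_isSuffix hw hw₀)
  exact ⟨n, hn.append_right t.flatten⟩

theorem IsLyndon.muchGt_of_mismatchLT (hu : IsLyndon u) {n : ℕ}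
    (hmis : MismatchLT (List.replicate n u).flatten v) : MuchGt v u := by
  obtain ⟨ls, hls⟩ := exists_isLyndonFactorization v
  obtain rfl : ls.flatten = v := hls.2.2
  cases ls with
  | nil => exact absurd hmis MismatchLT.not_nil_right
  | cons l t =>
    refine ⟨l, t, hls, not_le.1 fun hlu : l ≤ u => ?_⟩
    exact not_mismatchLT_flatten (fun _ => hu.le_of_isSuffix_replicate_flatten)
      (fun _ hm => (hls.le_head hm).trans hlu) hmis

theorem muchGt_pow_append_general {a b : List X} {i : ℕ} (hu : IsLyndon u)
    (ha : a.length ≤ i * u.length) (hge : (List.replicate i u).flatten ≤ a) (hb : MuchGt b u) :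
    MuchGt (a ++ b) u := by
  rcases hge.eq_or_lt with rfl | hlt
  · obtain ⟨n, hn⟩ := hb.exists_mismatchLT hu.1
    apply hu.muchGt_of_mismatchLT (n := i + n)
    rwa [List.replicate_add, List.flatten_append, mismatchLT_append_left_iff]
  · have hmis : MismatchLT (List.replicate i u).flatten a :=
      mismatchLT_of_lt_of_length_le hlt (by simpa using ha)
    exact hu.muchGt_of_mismatchLT (hmis.append_right b)

end Words

/-- If `u` is a Lyndon word, `i ≥ 1`, `a` is a word of length `i·l(u)` with `a ≥ u^i`
lexicographically, and `b ≫ u`, then `a ++ b ≫ u`. -/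
theorem muchGt_pow_append {X : Type*} [Fintype X] [LinearOrder X]
    (u : List X) (hu : IsLyndon u) (i : ℕ) (hi : 0 < i)
    (a : List X) (ha : a.length = i * u.length)
    (hge : a = (List.replicate i u).flatten ∨
      List.Lex (· < ·) (List.replicate i u).flatten a)
    (b : List X) (hb : MuchGt b u) :
    MuchGt (a ++ b) u :=
  muchGt_pow_append_general hu ha.le (le_iff_eq_or_lt.2 (hge.imp_left Eq.symm)) hb
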